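/- Any injective quasinilpotent bounded linear operator T with dense range acting on a separable infinite-dimensional complex Banach space is algebraically similar to the Volterra operator acting on C[0,1]. -/

import Mathlib

open MeasureTheory Set

/-- The Volterra operator on `C[0,1]` (complex-valued): `(V f)(x) = ∫_0^x f(t) dt`. -/
noncomputable def volterra : C(Set.Icc (0:ℝ) 1, ℂ) →ₗ[ℂ] C(Set.Icc (0:ℝ) 1, ℂ) where
  toFun f :=
    ⟨fun x => ∫ t in (0:ℝ)..(x : ℝ), f (Set.projIcc 0 1 zero_le_one t),
      (intervalIntegral.continuous_primitive
        (fun a b => (f.continuous.comp continuous_projIcc).intervalIntegrable a b) 0).comp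
        continuous_subtype_val⟩
  map_add' f g := by
    ext x
    simp only [ContinuousMap.coe_mk, ContinuousMap.add_apply]
    exact intervalIntegral.integral_add
      ((f.continuous.comp continuous_projIcc).intervalIntegrable _ _)
      ((g.continuous.comp continuous_projIcc).intervalIntegrable _ _)
  map_smul' c f := by
    ext x
    simp only [ContinuousMap.coe_mk, ContinuousMap.smul_apply, RingHom.id_apply]
    exact intervalIntegral.integral_smul c _

/-- A linear operator on a complex vector space is quasinilpotent if its spectrum is
contained in `{0}`, i.e. `T - z • id` is bijective for every nonzero `z`. -/
def IsQuasinilpotentOp {X : Type*} [AddCommGroup X] [Module ℂ X] (T : X →ₗ[ℂ] X) : Prop :=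
  ∀ z : ℂ, z ≠ 0 → Function.Bijective fun x => T x - z • x

open Polynomial Cardinal Filter Topology
open scoped nonZeroDivisors

/-- A divisible module over a principal ideal domain satisfies Baer's criterion. -/
theorem baer_of_forall_smul_surjective {R Q : Type*} [CommRing R]
    [IsPrincipalIdealRing R] [AddCommGroup Q] [Module R Q]
    (h : ∀ r : R, r ≠ 0 → Function.Surjective fun x : Q => r • x) : Module.Baer R Q := by
  intro I g
  obtain ⟨r, rfl⟩ := (IsPrincipalIdealRing.principal I).principal
  have hr : r ∈ Submodule.span R {r} := Submodule.mem_span_singleton_self r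
  rcases eq_or_ne r 0 with rfl | hr0
  · refine ⟨0, fun x hx => ?_⟩
    have hx0 : x = 0 := by simpa using hx
    subst hx0
    exact (map_zero g).symm
  · obtain ⟨q, hq⟩ := h r hr0 (g ⟨r, hr⟩)
    refine ⟨LinearMap.toSpanSingleton R Q q, fun x hx => ?_⟩
    obtain ⟨s, rfl⟩ := Submodule.mem_span_singleton.1 hx
    have hs : (⟨s • r, hx⟩ : Submodule.span R {r}) = s • ⟨r, hr⟩ := rfl
    rw [hs, map_smul g, ← hq]
    simp [mul_smul]

/-- An operator without spectrum on a complex vector space makes every nonzero polynomial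
invertible. -/
theorem isUnit_aeval_of_spectrum_eq_empty {D : Type*} [AddCommGroup D] [Module ℂ D]
    {A : Module.End ℂ D} (hA : ∀ z : ℂ, IsUnit (A - algebraMap ℂ _ z)) {p : ℂ[X]} (hp : p ≠ 0) :
    IsUnit (aeval A p) := by
  rw [(IsAlgClosed.splits p).eq_prod_roots, map_mul]
  refine IsUnit.mul ?_ ?_
  · rw [aeval_C]
    exact (IsUnit.mk0 _ (leadingCoeff_ne_zero.2 hp)).map _
  · by_contra hn
    obtain ⟨k, hk, -⟩ := spectrum.exists_mem_of_not_isUnit_aeval_prod hn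
    rw [spectrum.mem_iff] at hk
    exact hk (by simpa using (hA k).neg)

theorem isLocalizedModule_id_of_isUnit_aeval {D : Type*} [AddCommGroup D] [Module ℂ D]
    {A : Module.End ℂ D} (hA : ∀ p : ℂ[X], p ≠ 0 → IsUnit (aeval A p)) :
    IsLocalizedModule ℂ[X]⁰ (LinearMap.id : Module.AEval' A →ₗ[ℂ[X]] Module.AEval' A) where
  map_units p := by
    rw [Module.End.isUnit_iff]
    have h := (Module.End.isUnit_iff _).1 (hA p (nonZeroDivisors.ne_zero p.2))
    exact h
  surj y := ⟨(y, 1), by simp⟩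
  exists_of_eq h := ⟨1, by simpa using h⟩

/-- Two operators without spectrum are similar as soon as the associated `ℂ[X]`-modules have the
same rank. -/
theorem exists_equiv_of_isUnit_aeval {D D' : Type*} [AddCommGroup D] [Module ℂ D]
    [AddCommGroup D'] [Module ℂ D'] {A : Module.End ℂ D} {B : Module.End ℂ D'}
    (hA : ∀ p : ℂ[X], p ≠ 0 → IsUnit (aeval A p)) (hB : ∀ p : ℂ[X], p ≠ 0 → IsUnit (aeval B p))
    (hrank : Module.rank ℂ[X] (Module.AEval' A) = 𝔠)
    (hrank' : Module.rank ℂ[X] (Module.AEval' B) = 𝔠) :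
    ∃ e : D ≃ₗ[ℂ] D', ∀ x, e (A x) = B (e x) := by
  have hloc : IsLocalizedModule ℂ[X]⁰ (LinearMap.id : Module.AEval' A →ₗ[ℂ[X]] Module.AEval' A) :=
    isLocalizedModule_id_of_isUnit_aeval hA
  have hloc' : IsLocalizedModule ℂ[X]⁰
      (LinearMap.id : Module.AEval' B →ₗ[ℂ[X]] Module.AEval' B) :=
    isLocalizedModule_id_of_isUnit_aeval hB
  let i := IsLocalizedModule.iso ℂ[X]⁰ (LinearMap.id : Module.AEval' A →ₗ[ℂ[X]] Module.AEval' A)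
  let i' := IsLocalizedModule.iso ℂ[X]⁰ (LinearMap.id : Module.AEval' B →ₗ[ℂ[X]] Module.AEval' B)
  have hr : Module.rank (FractionRing ℂ[X]) (LocalizedModule ℂ[X]⁰ (Module.AEval' A)) = 𝔠 := by
    rw [IsFractionRing.rank_right_eq ℂ[X] (FractionRing ℂ[X]), i.rank_eq, hrank]
  have hr' : Module.rank (FractionRing ℂ[X]) (LocalizedModule ℂ[X]⁰ (Module.AEval' B)) = 𝔠 := by
    rw [IsFractionRing.rank_right_eq ℂ[X] (FractionRing ℂ[X]), i'.rank_eq, hrank']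
  obtain ⟨f⟩ := nonempty_linearEquiv_of_lift_rank_eq
    (R := FractionRing ℂ[X]) (M := LocalizedModule ℂ[X]⁰ (Module.AEval' A))
    (M' := LocalizedModule ℂ[X]⁰ (Module.AEval' B))
    (by rw [hr, hr', lift_continuum, lift_continuum])
  let e : Module.AEval' A ≃ₗ[ℂ[X]] Module.AEval' B :=
    i.symm ≪≫ₗ f.restrictScalars ℂ[X] ≪≫ₗ i'
  refine ⟨Module.AEval'.of A ≪≫ₗ e.restrictScalars ℂ ≪≫ₗ (Module.AEval'.of B).symm, fun x => ?_⟩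
  simp only [LinearEquiv.trans_apply, LinearEquiv.restrictScalars_apply]
  rw [← Module.AEval'.X_smul_of, map_smul, Module.AEval'.of_symm_X_smul]

/-- A submodule on which every nonzero polynomial in `T` is invertible has an invariant
complement: there is a projection onto it commuting with `T`. -/
theorem exists_retraction_of_isUnit_aeval {X : Type*} [AddCommGroup X] [Module ℂ X]
    {T : Module.End ℂ X} {D : Submodule ℂ X} (hD : ∀ x ∈ D, T x ∈ D)
    (hu : ∀ p : ℂ[X], p ≠ 0 → IsUnit (aeval (T.restrict hD) p)) :
    ∃ ρ : X →ₗ[ℂ] D, (∀ x, ρ (T x) = T.restrict hD (ρ x)) ∧ ∀ d : D, ρ d = d := by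
  let A : Module.End ℂ D := T.restrict hD
  have hB : Module.Baer ℂ[X] (Module.AEval' A) := by
    refine baer_of_forall_smul_surjective fun p hp y => ?_
    obtain ⟨x, hx⟩ := ((Module.End.isUnit_iff _).1 (hu p hp)).surjective
      ((Module.AEval'.of A).symm y)
    refine ⟨Module.AEval'.of A x, (Module.AEval'.of A).symm.injective ?_⟩
    rw [← hx]
    simp [A]
  let j : Module.AEval' A →ₗ[ℂ[X]] Module.AEval' T :=
    LinearMap.ofAEval A ((Module.AEval'.of T).toLinearMap ∘ₗ D.subtype) fun m =>
      (Module.AEval'.X_smul_of T (m : X)).symm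
  have hj : ∀ d : D, j (Module.AEval'.of A d) = Module.AEval'.of T (d : X) := fun d => rfl
  have hinj : Function.Injective j := fun a b hab =>
    (Module.AEval'.of A).symm.injective
      (Subtype.ext ((Module.AEval'.of T).injective hab))
  obtain ⟨h, hh⟩ := hB.extension_property j hinj LinearMap.id
  refine ⟨(Module.AEval'.of A).symm.toLinearMap ∘ₗ h.restrictScalars ℂ ∘ₗ
    (Module.AEval'.of T).toLinearMap, fun x => ?_, fun d => ?_⟩
  · simp only [LinearMap.comp_apply, LinearEquiv.coe_coe, LinearMap.restrictScalars_apply]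
    rw [← Module.AEval'.X_smul_of, map_smul, Module.AEval'.of_symm_X_smul]
  · have := LinearMap.congr_fun hh (Module.AEval'.of A d)
    simp only [LinearMap.comp_apply, LinearEquiv.coe_coe, LinearMap.restrictScalars_apply] at this ⊢
    rw [← hj, this]
    simp

/-- The intersection of the ranges of the powers of an operator. -/
def powerCore {X : Type*} [AddCommGroup X] [Module ℂ X] (T : Module.End ℂ X) : Submodule ℂ X :=
  ⨅ n : ℕ, LinearMap.range (T ^ n)

/-- An operator is tame if every formal series `∑ T ^ j x_j` is the expansion of some vector. -/
def IsTameOp {X : Type*} [AddCommGroup X] [Module ℂ X] (T : Module.End ℂ X) : Prop :=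
  ∀ u : ℕ → X, ∃ x : X, ∀ n : ℕ, x - ∑ j ∈ Finset.range n, (T ^ j) (u j) ∈ LinearMap.range (T ^ n)

section PowerCore

variable {X : Type*} [AddCommGroup X] [Module ℂ X] {T : Module.End ℂ X}

theorem mem_powerCore {x : X} : x ∈ powerCore T ↔ ∀ n : ℕ, ∃ y, (T ^ n) y = x := by
  simp [powerCore]

theorem apply_mem_powerCore : ∀ x ∈ powerCore T, T x ∈ powerCore T := by
  intro x hx
  rw [mem_powerCore] at hx ⊢
  intro n
  obtain ⟨y, rfl⟩ := hx n
  refine ⟨T y, ?_⟩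
  rw [← Module.End.mul_apply, ← pow_succ, pow_succ', Module.End.mul_apply]

/-- Bijectivity of `T - z` on the whole space passes to the core; at `z = 0` injectivity is
enough. -/
theorem isUnit_restrict_powerCore_sub (hinj : Function.Injective T) (hq : IsQuasinilpotentOp T)
    (z : ℂ) :
    IsUnit (T.restrict apply_mem_powerCore - algebraMap ℂ (Module.End ℂ (powerCore T)) z) := by
  have hval : ∀ d : powerCore T,
      (((T.restrict apply_mem_powerCore - algebraMap ℂ (Module.End ℂ (powerCore T)) z) d :
        powerCore T) : X) = T d - z • (d : X) := fun d => by
    simp [Module.algebraMap_end_apply]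
  have hpow : ∀ n : ℕ, Function.Injective (T ^ n) := fun n => by
    rw [Module.End.coe_pow]
    exact hinj.iterate n
  rw [Module.End.isUnit_iff]
  rcases eq_or_ne z 0 with rfl | hz
  · constructor
    · intro a b hab
      have := congrArg Subtype.val hab
      rw [hval, hval] at this
      exact Subtype.ext (hinj (by simpa using this))
    · intro d
      obtain ⟨y, hy⟩ := mem_powerCore.1 d.2 1
      rw [pow_one] at hy
      refine ⟨⟨y, mem_powerCore.2 fun n => ?_⟩, Subtype.ext ?_⟩
      · obtain ⟨w, hw⟩ := mem_powerCore.1 d.2 (n + 1)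
        refine ⟨w, hinj ?_⟩
        rw [hy, ← hw, pow_succ', Module.End.mul_apply]
      · rw [hval]
        simpa using hy
  · constructor
    · intro a b hab
      have := congrArg Subtype.val hab
      rw [hval, hval] at this
      exact Subtype.ext ((hq z hz).injective this)
    · intro d
      obtain ⟨x, hx⟩ := (hq z hz).surjective (d : X)
      refine ⟨⟨x, mem_powerCore.2 fun n => ?_⟩, Subtype.ext ?_⟩
      · obtain ⟨y, hy⟩ := mem_powerCore.1 d.2 n
        obtain ⟨w, hw⟩ := (hq z hz).surjective y
        refine ⟨w, (hq z hz).injective ?_⟩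
        simp only at hx hw ⊢
        rw [hx, ← hy, ← hw, map_sub, map_smul, ← Module.End.mul_apply, ← Module.End.mul_apply,
          ← pow_succ, ← pow_succ']
      · rw [hval]
        exact hx

theorem isUnit_aeval_restrict_powerCore (hinj : Function.Injective T)
    (hq : IsQuasinilpotentOp T) (p : ℂ[X]) (hp : p ≠ 0) :
    IsUnit (aeval (T.restrict (apply_mem_powerCore (T := T))) p) :=
  isUnit_aeval_of_spectrum_eq_empty (isUnit_restrict_powerCore_sub hinj hq) hp

/-- Taking the coefficients of the expansion of a vector along powers of a tame injective operator
identifies the operator, modulo its core, with a shift. -/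
theorem exists_coefficients (hinj : Function.Injective T) (ht : IsTameOp T) :
    ∃ c : X →ₗ[ℂ] (ℕ → X ⧸ LinearMap.range T), (∀ x, c (T x) 0 = 0) ∧
      (∀ x n, c (T x) (n + 1) = c x n) ∧ LinearMap.ker c = powerCore T ∧
      Function.Surjective c := by
  let q := (LinearMap.range T).mkQ
  obtain ⟨s, hs⟩ := q.exists_rightInverse_of_surjective (Submodule.range_mkQ _)
  have hqs : ∀ e, q (s e) = e := fun e => LinearMap.congr_fun hs e
  have hqT : ∀ x, q (T x) = 0 := fun x =>
    (Submodule.Quotient.mk_eq_zero _).2 (LinearMap.mem_range_self T x)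
  have hmem : ∀ x, x - s (q x) ∈ LinearMap.range T := fun x => by
    rw [← Submodule.Quotient.mk_eq_zero]
    exact (map_sub q _ _).trans (by rw [hqs, sub_self])
  let R : X →ₗ[ℂ] X := (LinearEquiv.ofInjective T hinj).symm.toLinearMap ∘ₗ
    (LinearMap.id - s ∘ₗ q).codRestrict (LinearMap.range T) hmem
  have hTR : ∀ x, T (R x) = x - s (q x) := fun x =>
    congrArg Subtype.val
      ((LinearEquiv.ofInjective T hinj).apply_symm_apply ⟨x - s (q x), hmem x⟩)
  have hRT : ∀ x, R (T x) = x := fun x => hinj (by rw [hTR, hqT, map_zero, sub_zero])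
  have hRs : ∀ e, R (s e) = 0 := fun e => hinj (by rw [hTR, hqs, sub_self, map_zero])
  have hRTpow : ∀ (n : ℕ) x, (R ^ n) ((T ^ n) x) = x := by
    intro n
    induction n with
    | zero => simp
    | succ n ih =>
      intro x
      rw [pow_succ, pow_succ', Module.End.mul_apply, Module.End.mul_apply, hRT, ih]
  refine ⟨LinearMap.pi fun n => q ∘ₗ (R ^ n), fun x => ?_, fun x n => ?_, ?_, ?_⟩
  · simpa using hqT x
  · simp [pow_succ, hRT]
  · ext x
    rw [LinearMap.mem_ker, mem_powerCore]
    constructor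
    · intro h n
      refine ⟨(R ^ n) x, ?_⟩
      induction n with
      | zero => simp
      | succ n ih =>
        have h0 : q ((R ^ n) x) = 0 := congrFun h n
        rw [pow_succ, pow_succ' R, Module.End.mul_apply, Module.End.mul_apply, hTR, h0, map_zero,
          sub_zero, ih]
    · intro h
      funext n
      obtain ⟨y, rfl⟩ := h (n + 1)
      simp only [LinearMap.pi_apply, LinearMap.comp_apply, Pi.zero_apply]
      rw [pow_succ, Module.End.mul_apply, hRTpow, hqT]
  · intro e
    obtain ⟨x, hx⟩ := ht fun n => s (e n)
    refine ⟨x, funext fun n => ?_⟩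
    obtain ⟨y, hy⟩ := hx (n + 1)
    have hxe : x = (∑ j ∈ Finset.range n, (T ^ j) (s (e j))) + (T ^ n) (s (e n) + T y) := by
      rw [Finset.sum_range_succ, pow_succ, Module.End.mul_apply] at hy
      rw [map_add, hy]
      abel
    have hz : ∀ j ∈ Finset.range n, (R ^ n) ((T ^ j) (s (e j))) = 0 := by
      intro j hj
      obtain ⟨k, rfl⟩ := Nat.exists_eq_add_of_lt (Finset.mem_range.1 hj)
      rw [show j + k + 1 = (k + 1) + j by ring, pow_add, Module.End.mul_apply, hRTpow, pow_succ,
        Module.End.mul_apply, hRs, map_zero]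
    simp only [LinearMap.pi_apply, LinearMap.comp_apply]
    rw [hxe, map_add, map_sum, Finset.sum_eq_zero hz, zero_add, hRTpow, map_add, hqs, hqT, add_zero]

/-- A tame injective quasinilpotent operator is the direct sum of its restriction to its core and
of a shift. -/
theorem exists_equiv_core_prod (hinj : Function.Injective T) (hq : IsQuasinilpotentOp T)
    (ht : IsTameOp T) :
    ∃ G : X ≃ₗ[ℂ] powerCore T × (ℕ → X ⧸ LinearMap.range T),
      (∀ x, (G (T x)).1 = T.restrict apply_mem_powerCore (G x).1) ∧
      (∀ x, (G (T x)).2 0 = 0) ∧ ∀ x n, (G (T x)).2 (n + 1) = (G x).2 n := by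
  obtain ⟨ρ, hρT, hρ⟩ := exists_retraction_of_isUnit_aeval apply_mem_powerCore
    (isUnit_aeval_restrict_powerCore hinj hq)
  obtain ⟨c, hc0, hcs, hker, hsurj⟩ := exists_coefficients hinj ht
  have hcore : ∀ d : powerCore T, c d = 0 := fun d => by
    rw [← LinearMap.mem_ker, hker]
    exact d.2
  have hbij : Function.Bijective (ρ.prod c) := by
    constructor
    · rw [← LinearMap.ker_eq_bot, LinearMap.ker_eq_bot']
      intro x hx
      have h1 : ρ x = 0 := congrArg Prod.fst hx
      have h2 : x ∈ powerCore T := hker ▸ LinearMap.mem_ker.2 (congrArg Prod.snd hx)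
      have h3 := hρ ⟨x, h2⟩
      rw [h1] at h3
      exact (congrArg Subtype.val h3).symm
    · rintro ⟨d, e⟩
      obtain ⟨x, rfl⟩ := hsurj e
      refine ⟨x + ((d - ρ x : powerCore T) : X), Prod.ext ?_ ?_⟩
      · change ρ (x + ((d - ρ x : powerCore T) : X)) = d
        rw [map_add, hρ, add_sub_cancel]
      · change c (x + ((d - ρ x : powerCore T) : X)) = c x
        rw [map_add, hcore, add_zero]
  exact ⟨LinearEquiv.ofBijective _ hbij, hρT, hc0, hcs⟩

end PowerCore

/-- Tame injective quasinilpotent operators whose core and cokernel have rank the continuum are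
all similar to each other. -/
theorem exists_similarity_of_tame {X Y : Type*} [AddCommGroup X] [Module ℂ X] [AddCommGroup Y]
    [Module ℂ Y] {T : Module.End ℂ X} {S : Module.End ℂ Y}
    (hTi : Function.Injective T) (hTq : IsQuasinilpotentOp T) (hTt : IsTameOp T)
    (hTc : Module.rank ℂ[X] (Module.AEval' (T.restrict (apply_mem_powerCore (T := T)))) = 𝔠)
    (hTr : Module.rank ℂ (X ⧸ LinearMap.range T) = 𝔠)
    (hSi : Function.Injective S) (hSq : IsQuasinilpotentOp S) (hSt : IsTameOp S)
    (hSc : Module.rank ℂ[X] (Module.AEval' (S.restrict (apply_mem_powerCore (T := S)))) = 𝔠)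
    (hSr : Module.rank ℂ (Y ⧸ LinearMap.range S) = 𝔠) :
    ∃ G : X ≃ₗ[ℂ] Y, ∀ x, G (T x) = S (G x) := by
  obtain ⟨G, hG1, hG0, hGs⟩ := exists_equiv_core_prod hTi hTq hTt
  obtain ⟨H, hH1, hH0, hHs⟩ := exists_equiv_core_prod hSi hSq hSt
  obtain ⟨e, he⟩ := exists_equiv_of_isUnit_aeval (isUnit_aeval_restrict_powerCore hTi hTq)
    (isUnit_aeval_restrict_powerCore hSi hSq) hTc hSc
  obtain ⟨f⟩ := nonempty_linearEquiv_of_lift_rank_eq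
    (R := ℂ) (M := X ⧸ LinearMap.range T) (M' := Y ⧸ LinearMap.range S)
    (by rw [hTr, hSr, lift_continuum, lift_continuum])
  refine ⟨G ≪≫ₗ (e.prodCongr (LinearEquiv.piCongrRight fun _ : ℕ => f)) ≪≫ₗ H.symm, fun x => ?_⟩
  apply H.injective
  simp only [LinearEquiv.trans_apply, LinearEquiv.apply_symm_apply]
  refine Prod.ext ?_ (funext fun n => ?_)
  · rw [hH1]
    simp [hG1, he]
  · cases n with
    | zero => rw [hH0]; simp [hG0]
    | succ n => rw [hHs]; simp [hGs]

/-- There are continuum many bounded sequences which are linearly independent modulo null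
sequences, given by the indicators of an almost disjoint family of sets. -/
theorem exists_independent_mod_null :
    ∃ χ : (ℕ → Bool) → ℕ → ℂ, (∀ a n, ‖χ a n‖ ≤ 1) ∧ ∀ l : (ℕ → Bool) →₀ ℂ,
      Tendsto (fun n => l.sum fun a c => c * χ a n) atTop (𝓝 0) → l = 0 := by
  classical
  let code : (ℕ → Bool) → ℕ → ℕ := fun a k => Encodable.encode ((List.range k).map a)
  have hcode : ∀ {a b : ℕ → Bool} {k m : ℕ}, code a k = code b m → k = m ∧ ∀ i < k, a i = b i := by
    intro a b k m h
    have h' := Encodable.encode_injective h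
    have hkm : k = m := by simpa using congrArg List.length h'
    subst hkm
    exact ⟨rfl, fun i hi => List.map_inj_left.1 h' i (List.mem_range.2 hi)⟩
  refine ⟨fun a n => if n ∈ Set.range (code a) then 1 else 0, fun a n => ?_, fun l hl => ?_⟩
  · dsimp only
    split_ifs <;> simp
  · ext a
    have hinj : Function.Injective (code a) := fun k m h => (hcode h).1
    have hlim := hl.comp hinj.nat_tendsto_atTop
    refine tendsto_nhds_unique (tendsto_const_nhds.congr' ?_) hlim
    have hoff : ∀ b ∈ l.support, ∀ᶠ k in atTop, b ≠ a → code a k ∉ Set.range (code b) := by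
      intro b _
      by_cases hb : b = a
      · exact Eventually.of_forall fun k h => absurd hb h
      · obtain ⟨i, hi⟩ := Function.ne_iff.1 hb
        filter_upwards [eventually_gt_atTop i] with k hk _
        rintro ⟨m, hm⟩
        obtain ⟨rfl, h⟩ := hcode hm
        exact hi (h i hk)
    filter_upwards [(Finset.eventually_all l.support).2 hoff] with k hk
    rw [Function.comp_apply, Finsupp.sum, Finset.sum_eq_single a]
    · simp
    · intro b hb hba
      rw [if_neg (hk b hb hba), mul_zero]
    · intro ha
      rw [Finsupp.notMem_support_iff.1 ha, zero_mul]

section Banach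

variable {X : Type*} [NormedAddCommGroup X] [NormedSpace ℂ X] {T : X →L[ℂ] X}

theorem coe_pow_apply (n : ℕ) (x : X) : ((T : Module.End ℂ X) ^ n) x = (T ^ n) x := by
  induction n generalizing x with
  | zero => rfl
  | succ n ih => rw [pow_succ, pow_succ, Module.End.mul_apply, ih]; rfl

theorem summable_pow_mul_norm_pow [CompleteSpace X] (hq : IsQuasinilpotentOp (T : X →ₗ[ℂ] X))
    {C : ℝ} (hC : 0 ≤ C) : Summable fun n : ℕ => C ^ n * ‖T ^ n‖ := by
  have hspec : spectralRadius ℂ T = 0 := by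
    refine le_antisymm (iSup₂_le fun z hz => ?_) zero_le
    rcases eq_or_ne z 0 with rfl | hz0
    · simp
    · refine absurd ?_ (spectrum.mem_iff.1 hz)
      have hu : IsUnit (T - algebraMap ℂ (X →L[ℂ] X) z) := by
        rw [ContinuousLinearMap.isUnit_iff_bijective]
        exact hq z hz0
      simpa using hu.neg
  have hlim := spectrum.pow_norm_pow_one_div_tendsto_nhds_spectralRadius T
  rw [hspec] at hlim
  have hpos : 0 < (2 * (C + 1))⁻¹ := by positivity
  have hev : ∀ᶠ n : ℕ in atTop, C ^ n * ‖T ^ n‖ ≤ (1 / 2 : ℝ) ^ n := by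
    filter_upwards [hlim.eventually_lt_const (ENNReal.ofReal_pos.2 hpos), eventually_gt_atTop 0]
      with n hn hn0
    rw [ENNReal.ofReal_lt_ofReal_iff hpos] at hn
    have h1 : ‖T ^ n‖ ≤ ((2 * (C + 1))⁻¹) ^ n := by
      have := pow_le_pow_left₀ (by positivity) hn.le n
      rwa [one_div, Real.rpow_inv_natCast_pow (norm_nonneg _) hn0.ne'] at this
    calc C ^ n * ‖T ^ n‖ ≤ (C + 1) ^ n * ((2 * (C + 1))⁻¹) ^ n := by gcongr; linarith
      _ = (1 / 2 : ℝ) ^ n := by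
        rw [← mul_pow]
        congr 1
        field_simp
  refine Summable.of_norm_bounded_eventually_nat (summable_geometric_two) ?_
  filter_upwards [hev] with n hn
  rwa [Real.norm_of_nonneg (by positivity)]

/-- Approximate solvability of `x = T w`, after applying `T` once more, lets one expand every
formal series `∑ T ^ j u_j`, with an expansion whose image under `T` is as small as desired. -/
theorem exists_expansion [CompleteSpace X] (h : ∀ x, ∀ ε > 0, ∃ w, ‖T (x - T w)‖ ≤ ε)
    (u : ℕ → X) {ε : ℝ} (hε : 0 < ε) :
    ∃ x, (∀ n, ∃ y, x - ∑ j ∈ Finset.range n, (T ^ j) (u j) = (T ^ n) y) ∧ ‖T x‖ ≤ ε := by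
  choose! W hW using h
  let δ : ℕ → ℝ := fun n => ε / 2 / 2 ^ n / (1 + ‖T‖) ^ n
  have hδ : ∀ n, 0 < δ n := fun n => by positivity
  let v : ℕ → X := fun n => Nat.rec (u 0) (fun k x => u (k + 1) + W x (δ k)) n
  have hv : ∀ n, v (n + 1) = u (n + 1) + W (v n) (δ n) := fun n => rfl
  let y : ℕ → X := fun n => v n - T (W (v n) (δ n))
  have hy : ∀ n, ‖T (y n)‖ ≤ δ n := fun n => hW _ _ (hδ n)
  have hbound : ∀ n j, ‖(T ^ (j + 1)) (y (n + j))‖ ≤ ε / 2 / 2 ^ j := by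
    intro n j
    rw [pow_succ, mul_apply_eq_comp]
    have h1 : (1 : ℝ) ≤ 1 + ‖T‖ := by linarith [norm_nonneg T]
    calc ‖(T ^ j) (T (y (n + j)))‖ ≤ ‖T ^ j‖ * ‖T (y (n + j))‖ := (T ^ j).le_opNorm _
      _ ≤ (1 + ‖T‖) ^ j * δ (n + j) := by
        gcongr
        · rcases Nat.eq_zero_or_pos j with rfl | hj
          · rw [pow_zero, pow_zero]
            exact ContinuousLinearMap.norm_id_le
          · exact (norm_pow_le' T hj).trans (by gcongr; linarith)
        · exact hy _
      _ ≤ (1 + ‖T‖) ^ j * (ε / 2 / 2 ^ j / (1 + ‖T‖) ^ j) := by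
        refine mul_le_mul_of_nonneg_left ?_ (by positivity)
        change ε / 2 / 2 ^ (n + j) / (1 + ‖T‖) ^ (n + j) ≤ _
        gcongr <;> first | exact h1 | norm_num
      _ = ε / 2 / 2 ^ j := by field_simp
  have hgeo := hasSum_geometric_two' ε
  have hsum : ∀ n, Summable fun j => (T ^ j) (y (n + j)) := fun n => by
    rw [← summable_nat_add_iff 1]
    refine Summable.of_norm_bounded hgeo.summable fun j => ?_
    have := hbound (n + 1) j
    rwa [show n + 1 + j = n + (j + 1) by ring] at this
  let z : ℕ → X := fun n => ∑' j, (T ^ j) (y (n + j))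
  have hz : ∀ n, z n = y n + T (z (n + 1)) := fun n => by
    simp only [z]
    rw [(hsum n).tsum_eq_zero_add, T.map_tsum (hsum (n + 1))]
    congr 1
    refine tsum_congr fun j => ?_
    rw [pow_succ', mul_apply_eq_comp, show n + 1 + j = n + (j + 1) by ring]
  refine ⟨z 0, fun n => ⟨z n - (v n - u n), ?_⟩, ?_⟩
  · induction n with
    | zero => simp [v]
    | succ n ih =>
      rw [Finset.sum_range_succ, ← sub_sub, ih, ← map_sub, pow_succ, mul_apply_eq_comp]
      congr 1
      rw [hz n, hv n]
      simp only [y, map_sub, map_add]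
      abel
  · simp only [z]
    rw [T.map_tsum (hsum 0)]
    refine tsum_of_norm_bounded hgeo fun j => ?_
    rw [← mul_apply_eq_comp, ← pow_succ']
    exact hbound 0 j

theorem isTameOp_of_approx [CompleteSpace X] (h : ∀ x, ∀ ε > 0, ∃ w, ‖T (x - T w)‖ ≤ ε) :
    IsTameOp (T : X →ₗ[ℂ] X) := by
  intro u
  obtain ⟨x, hx, -⟩ := exists_expansion h u one_pos
  refine ⟨x, fun n => ?_⟩
  obtain ⟨y, hy⟩ := hx n
  exact ⟨y, by simp only [coe_pow_apply]; exact hy.symm⟩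

theorem exists_mem_powerCore_ne_zero [CompleteSpace X] [Nontrivial X]
    (hinj : Function.Injective T) (h : ∀ x, ∀ ε > 0, ∃ w, ‖T (x - T w)‖ ≤ ε) :
    ∃ x ∈ powerCore (T : X →ₗ[ℂ] X), x ≠ 0 := by
  obtain ⟨v, hv⟩ := exists_ne (0 : X)
  have hTv : 0 < ‖T v‖ := norm_pos_iff.2 fun h0 => hv (hinj (by rw [h0, map_zero]))
  obtain ⟨x, hx, hxn⟩ := exists_expansion h (Pi.single 0 v) (half_pos hTv)
  refine ⟨x - v, mem_powerCore.2 fun n => ?_, fun h0 => ?_⟩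
  · rcases n with _ | n
    · exact ⟨x - v, rfl⟩
    · obtain ⟨y, hy⟩ := hx (n + 1)
      refine ⟨y, ?_⟩
      rw [coe_pow_apply, ← hy, Finset.sum_range_succ', Finset.sum_eq_zero fun j _ => by simp]
      simp
  · rw [sub_eq_zero.1 h0] at hxn
    linarith

end Banach

section PowerSeriesCalculus

variable {X : Type*} [NormedAddCommGroup X] [NormedSpace ℂ X] {T : X →L[ℂ] X}

/-- Boundedness of the coefficients of a power series. -/
def HasBoundedCoeffs (f : PowerSeries ℂ) : Prop :=
  ∃ M : ℝ, ∀ n, ‖PowerSeries.coeff n f‖ ≤ M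

/-- The value of a power series at an operator. -/
noncomputable def powerSeriesEval (T : X →L[ℂ] X) (f : PowerSeries ℂ) : X →L[ℂ] X :=
  ∑' n, PowerSeries.coeff n f • T ^ n

theorem HasBoundedCoeffs.add {f g : PowerSeries ℂ} (hf : HasBoundedCoeffs f)
    (hg : HasBoundedCoeffs g) : HasBoundedCoeffs (f + g) := by
  obtain ⟨M, hM⟩ := hf
  obtain ⟨N, hN⟩ := hg
  exact ⟨M + N, fun n => by
    rw [map_add]
    exact (norm_add_le _ _).trans (add_le_add (hM n) (hN n))⟩

theorem HasBoundedCoeffs.C_mul {f : PowerSeries ℂ} (hf : HasBoundedCoeffs f) (c : ℂ) :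
    HasBoundedCoeffs (PowerSeries.C c * f) := by
  obtain ⟨M, hM⟩ := hf
  exact ⟨‖c‖ * M, fun n => by
    rw [PowerSeries.coeff_C_mul, norm_mul]
    exact mul_le_mul_of_nonneg_left (hM n) (norm_nonneg c)⟩

theorem HasBoundedCoeffs.X_mul {f : PowerSeries ℂ} (hf : HasBoundedCoeffs f) :
    HasBoundedCoeffs (PowerSeries.X * f) := by
  obtain ⟨M, hM⟩ := hf
  refine ⟨M, fun n => ?_⟩
  cases n with
  | zero => simpa using (norm_nonneg _).trans (hM 0)
  | succ n => simpa [PowerSeries.coeff_succ_X_mul] using hM n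

theorem HasBoundedCoeffs.of_X_mul {f : PowerSeries ℂ} (hf : HasBoundedCoeffs (PowerSeries.X * f)) :
    HasBoundedCoeffs f := by
  obtain ⟨M, hM⟩ := hf
  exact ⟨M, fun n => by simpa [PowerSeries.coeff_succ_X_mul] using hM (n + 1)⟩

theorem powerSeriesEval_C_mul (c : ℂ) (f : PowerSeries ℂ) :
    powerSeriesEval T (PowerSeries.C c * f) = c • powerSeriesEval T f := by
  simp only [powerSeriesEval, PowerSeries.coeff_C_mul, mul_smul]
  exact tsum_const_smul'' c

variable [CompleteSpace X]

theorem HasBoundedCoeffs.summable (hT : Summable fun n : ℕ => ‖T ^ n‖) {f : PowerSeries ℂ}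
    (hf : HasBoundedCoeffs f) : Summable fun n => PowerSeries.coeff n f • T ^ n := by
  obtain ⟨M, hM⟩ := hf
  refine Summable.of_norm_bounded (hT.mul_left M) fun n => ?_
  rw [norm_smul]
  exact mul_le_mul_of_nonneg_right (hM n) (norm_nonneg _)

theorem powerSeriesEval_add (hT : Summable fun n : ℕ => ‖T ^ n‖) {f g : PowerSeries ℂ}
    (hf : HasBoundedCoeffs f) (hg : HasBoundedCoeffs g) :
    powerSeriesEval T (f + g) = powerSeriesEval T f + powerSeriesEval T g := by
  simp only [powerSeriesEval, map_add, add_smul]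
  exact (hf.summable hT).tsum_add (hg.summable hT)

theorem powerSeriesEval_X_mul (hT : Summable fun n : ℕ => ‖T ^ n‖) {f : PowerSeries ℂ}
    (hf : HasBoundedCoeffs f) :
    powerSeriesEval T (PowerSeries.X * f) = T * powerSeriesEval T f := by
  simp only [powerSeriesEval]
  rw [(hf.X_mul.summable hT).tsum_eq_zero_add, ← (hf.summable hT).tsum_mul_left]
  simp [PowerSeries.coeff_succ_X_mul, pow_succ']

theorem commute_powerSeriesEval (hT : Summable fun n : ℕ => ‖T ^ n‖) {f : PowerSeries ℂ}
    (hf : HasBoundedCoeffs f) : Commute T (powerSeriesEval T f) := by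
  simp only [Commute, SemiconjBy, powerSeriesEval]
  rw [← (hf.summable hT).tsum_mul_left, ← (hf.summable hT).tsum_mul_right]
  exact tsum_congr fun n => by
    rw [mul_smul_comm, smul_mul_assoc, ← pow_succ, ← pow_succ']

theorem powerSeriesEval_polynomial_mul (hT : Summable fun n : ℕ => ‖T ^ n‖) {f : PowerSeries ℂ}
    (hf : HasBoundedCoeffs f) (p : ℂ[X]) : HasBoundedCoeffs ((p : PowerSeries ℂ) * f) ∧
      powerSeriesEval T ((p : PowerSeries ℂ) * f) = aeval T p * powerSeriesEval T f := by
  induction p using Polynomial.induction_on' with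
  | add p q hp hq =>
    rw [Polynomial.coe_add, add_mul, map_add, add_mul, powerSeriesEval_add hT hp.1 hq.1, hp.2, hq.2]
    exact ⟨hp.1.add hq.1, rfl⟩
  | monomial n c =>
    rw [← C_mul_X_pow_eq_monomial]
    have hn : ∀ n : ℕ, HasBoundedCoeffs (PowerSeries.X ^ n * f) ∧
        powerSeriesEval T (PowerSeries.X ^ n * f) = T ^ n * powerSeriesEval T f := by
      intro n
      induction n with
      | zero => simpa using hf
      | succ n ih =>
        rw [pow_succ', pow_succ', mul_assoc, mul_assoc, powerSeriesEval_X_mul hT ih.1, ih.2]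
        exact ⟨ih.1.X_mul, rfl⟩
    rw [Polynomial.coe_mul, Polynomial.coe_C, Polynomial.coe_pow, Polynomial.coe_X, mul_assoc,
      powerSeriesEval_C_mul, (hn n).2]
    refine ⟨(hn n).1.C_mul c, ?_⟩
    simp [Algebra.algebraMap_eq_smul_one]

/-- A nonzero power series in an injective quasinilpotent operator is injective. -/
theorem eq_zero_of_powerSeriesEval_apply_eq_zero (hinj : Function.Injective T)
    (hT : ∀ C : ℝ, 0 ≤ C → Summable fun n : ℕ => C ^ n * ‖T ^ n‖) {f : PowerSeries ℂ}
    (hf : HasBoundedCoeffs f) {x : X} (hx : x ≠ 0) (h : powerSeriesEval T f x = 0) : f = 0 := by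
  have hT1 : Summable fun n : ℕ => ‖T ^ n‖ := by simpa using hT 1 zero_le_one
  have hconst : ∀ g : PowerSeries ℂ, HasBoundedCoeffs g → powerSeriesEval T g x = 0 →
      PowerSeries.constantCoeff g = 0 := by
    intro g hg hgx
    by_contra hg0
    set c := PowerSeries.constantCoeff g with hc
    let k : PowerSeries ℂ := PowerSeries.mk fun n => PowerSeries.coeff (n + 1) g
    have hk : HasBoundedCoeffs k := by
      obtain ⟨M, hM⟩ := hg
      exact ⟨M, fun n => by simpa [k] using hM (n + 1)⟩
    set L := powerSeriesEval T k with hL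
    have hgk : powerSeriesEval T g = c • 1 + T * L := by
      simp only [hL, powerSeriesEval]
      rw [(hg.summable hT1).tsum_eq_zero_add, ← (hk.summable hT1).tsum_mul_left]
      simp [k, hc, pow_succ']
    let B : X →L[ℂ] X := T * ((-c⁻¹) • L)
    have hBx : B x = x := by
      rw [hgk] at hgx
      have h1 : T (L x) = -(c • x) := by
        rw [eq_neg_iff_add_eq_zero, add_comm]
        simpa using hgx
      simp [B, h1, hg0]
    have hBn : ∀ n : ℕ, (B ^ n) x = x := by
      intro n
      induction n with
      | zero => rfl
      | succ n ih => rw [pow_succ, mul_apply_eq_comp, hBx, ih]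
    have hcomm : Commute T ((-c⁻¹) • L) := (commute_powerSeriesEval hT1 hk).smul_right _
    have hlim : Tendsto (fun n : ℕ => ‖(-c⁻¹) • L‖ ^ n * ‖T ^ n‖ * ‖x‖) atTop (𝓝 (0 * ‖x‖)) :=
      (hT _ (norm_nonneg _)).tendsto_atTop_zero.mul_const _
    rw [zero_mul] at hlim
    refine hx (norm_le_zero_iff.1 (ge_of_tendsto hlim ?_))
    filter_upwards [eventually_gt_atTop 0] with n hn
    calc ‖x‖ = ‖(B ^ n) x‖ := by rw [hBn]
      _ ≤ ‖B ^ n‖ * ‖x‖ := (B ^ n).le_opNorm x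
      _ ≤ ‖(-c⁻¹) • L‖ ^ n * ‖T ^ n‖ * ‖x‖ := by
        gcongr
        rw [show B ^ n = T ^ n * ((-c⁻¹) • L) ^ n from hcomm.mul_pow n, mul_comm (_ ^ n)]
        exact (norm_mul_le _ _).trans (by gcongr; exact norm_pow_le' _ hn)
  have hdvd : ∀ (n : ℕ) (g : PowerSeries ℂ), HasBoundedCoeffs g → powerSeriesEval T g x = 0 →
      PowerSeries.coeff n g = 0 := by
    intro n
    induction n with
    | zero => intro g hg hgx; simpa using hconst g hg hgx
    | succ n ih =>
      intro g hg hgx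
      obtain ⟨k, rfl⟩ := PowerSeries.X_dvd_iff.2 (hconst g hg hgx)
      rw [PowerSeries.coeff_succ_X_mul]
      refine ih k hg.of_X_mul (hinj ?_)
      rwa [powerSeriesEval_X_mul hT1 hg.of_X_mul, mul_apply_eq_comp, ← map_zero T] at hgx
  ext n
  simpa using hdvd n f hf h

end PowerSeriesCalculus

/-- The power series with coefficients `c n` at the powers `2 ^ n`. -/
noncomputable def lacunarySeries (c : ℕ → ℂ) : PowerSeries ℂ :=
  PowerSeries.mk fun k => if 2 ^ Nat.log 2 k = k then c (Nat.log 2 k) else 0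

theorem hasBoundedCoeffs_lacunarySeries {c : ℕ → ℂ} (hc : ∀ n, ‖c n‖ ≤ 1) :
    HasBoundedCoeffs (lacunarySeries c) := by
  refine ⟨1, fun n => ?_⟩
  rw [lacunarySeries, PowerSeries.coeff_mk]
  split_ifs
  · exact hc _
  · simp

theorem eventually_coeff_mul_lacunarySeries (c : ℕ → ℂ) (p : ℂ[X]) (i : ℕ) :
    ∀ᶠ n in atTop, PowerSeries.coeff (2 ^ n + i) ((p : PowerSeries ℂ) * lacunarySeries c) =
      p.coeff i * c n := by
  filter_upwards [eventually_gt_atTop (p.natDegree + i + 1)] with n hn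
  rw [PowerSeries.coeff_mul, Finset.sum_eq_single (i, 2 ^ n)]
  · simp [lacunarySeries, Nat.log_pow]
  · rintro ⟨j, k⟩ hjk hne
    rw [Finset.HasAntidiagonal.mem_antidiagonal] at hjk
    simp only at hjk
    rw [Polynomial.coeff_coe]
    rcases lt_or_ge p.natDegree j with hj | hj
    · rw [Polynomial.coeff_eq_zero_of_natDegree_lt hj, zero_mul]
    · rw [lacunarySeries, PowerSeries.coeff_mk, if_neg, mul_zero]
      intro hk
      have hn2 : n - 1 < 2 ^ (n - 1) := Nat.lt_two_pow_self
      have hpow : 2 ^ n = 2 * 2 ^ (n - 1) := by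
        rw [← pow_succ', Nat.sub_add_cancel (by omega)]
      have hlo : n - 1 < Nat.log 2 k := by
        rw [← Nat.pow_lt_pow_iff_right (a := 2) (by norm_num), hk]
        omega
      have hhi : Nat.log 2 k < n + 1 := by
        rw [← Nat.pow_lt_pow_iff_right (a := 2) (by norm_num), hk, pow_succ]
        omega
      have hlog : Nat.log 2 k = n := by omega
      rw [hlog] at hk
      exact hne (Prod.ext (by simp only; omega) hk.symm)
  · intro h
    exact absurd (Finset.HasAntidiagonal.mem_antidiagonal.2 (add_comm _ _)) h

section Ranks

variable {X : Type*} [NormedAddCommGroup X] [NormedSpace ℂ X] {T : X →L[ℂ] X}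

theorem coe_aeval_restrict_apply {D : Submodule ℂ X} (hD : ∀ x ∈ D, (T : X →ₗ[ℂ] X) x ∈ D)
    (p : ℂ[X]) (d : D) :
    ((aeval ((T : X →ₗ[ℂ] X).restrict hD) p d : D) : X) = aeval T p (d : X) := by
  induction p using Polynomial.induction_on' with
  | add p q hp hq => simp [hp, hq]
  | monomial n c =>
    have hn : ∀ n : ℕ, ((((T : X →ₗ[ℂ] X).restrict hD) ^ n) d : X) = (T ^ n) (d : X) := by
      intro n
      induction n with
      | zero => rfl
      | succ n ih => rw [pow_succ', pow_succ', mul_apply_eq_comp T, ← ih]; rfl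
    simp [aeval_monomial, hn, Algebra.algebraMap_eq_smul_one]

variable [CompleteSpace X]

/-- The core of an injective quasinilpotent operator, when nonzero, has rank at least the
continuum over `ℂ[X]`. -/
theorem continuum_le_rank_powerCore (hinj : Function.Injective T)
    (hT : ∀ C : ℝ, 0 ≤ C → Summable fun n : ℕ => C ^ n * ‖T ^ n‖)
    (hcore : ∃ x ∈ powerCore (T : X →ₗ[ℂ] X), x ≠ 0) :
    𝔠 ≤ Module.rank ℂ[X] (Module.AEval' ((T : X →ₗ[ℂ] X).restrict
      (apply_mem_powerCore (T := (T : X →ₗ[ℂ] X))))) := by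
  have hT1 : Summable fun n : ℕ => ‖T ^ n‖ := by simpa using hT 1 zero_le_one
  obtain ⟨x, hxc, hx⟩ := hcore
  obtain ⟨χ, hχ, hind⟩ := exists_independent_mod_null
  set A := (T : X →ₗ[ℂ] X).restrict (apply_mem_powerCore (T := (T : X →ₗ[ℂ] X))) with hA
  let f : (ℕ → Bool) → PowerSeries ℂ := fun a => lacunarySeries (χ a)
  have hf : ∀ a, HasBoundedCoeffs (f a) := fun a => hasBoundedCoeffs_lacunarySeries (hχ a)
  have hmem : ∀ a, powerSeriesEval T (f a) x ∈ powerCore (T : X →ₗ[ℂ] X) := by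
    intro a
    refine mem_powerCore.2 fun n => ?_
    obtain ⟨y, rfl⟩ := mem_powerCore.1 hxc n
    refine ⟨powerSeriesEval T (f a) y, ?_⟩
    rw [coe_pow_apply, coe_pow_apply, ← mul_apply_eq_comp,
      ((commute_powerSeriesEval hT1 (hf a)).pow_left n).eq, mul_apply_eq_comp]
  let d : (ℕ → Bool) → powerCore (T : X →ₗ[ℂ] X) := fun a => ⟨_, hmem a⟩
  have hli : LinearIndependent ℂ[X] fun a => Module.AEval'.of A (d a) := by
    rw [linearIndependent_iff]
    intro l hl
    have hsum : ∀ s : Finset (ℕ → Bool),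
        HasBoundedCoeffs (∑ a ∈ s, (l a : PowerSeries ℂ) * f a) ∧
        powerSeriesEval T (∑ a ∈ s, (l a : PowerSeries ℂ) * f a) x =
          (((Module.AEval'.of A).symm (∑ a ∈ s, l a • Module.AEval'.of A (d a)) :
            powerCore (T : X →ₗ[ℂ] X)) : X) := by
      classical
      intro s
      induction s using Finset.induction_on with
      | empty => exact ⟨⟨0, by simp⟩, by simp [powerSeriesEval]⟩
      | insert a s ha ih =>
        have hp := powerSeriesEval_polynomial_mul hT1 (hf a) (l a)
        rw [Finset.sum_insert ha, Finset.sum_insert ha, powerSeriesEval_add hT1 hp.1 ih.1, hp.2,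
          map_add, Submodule.coe_add, ← ih.2]
        refine ⟨hp.1.add ih.1, ?_⟩
        rw [add_apply, mul_apply_eq_comp]
        congr 1
        rw [← Module.AEval.of_aeval_smul, LinearEquiv.symm_apply_apply]
        exact (coe_aeval_restrict_apply _ (l a) (d a)).symm
    have hzero : ∑ a ∈ l.support, (l a : PowerSeries ℂ) * f a = 0 := by
      refine eq_zero_of_powerSeriesEval_apply_eq_zero hinj hT (hsum _).1 hx ?_
      rw [(hsum _).2]
      rw [Finsupp.linearCombination_apply, Finsupp.sum] at hl
      rw [hl]
      simp
    ext a i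
    have hli := hind (l.mapRange (fun p => p.coeff i) (coeff_zero i)) ?_
    · exact DFunLike.congr_fun hli a
    · refine tendsto_const_nhds.congr' ?_
      filter_upwards [(Finset.eventually_all l.support).2 fun a _ =>
        eventually_coeff_mul_lacunarySeries (χ a) (l a) i] with n hn
      rw [Finsupp.sum_mapRange_index fun _ => zero_mul _, Finsupp.sum,
        ← Finset.sum_congr rfl hn, ← map_sum]
      exact ((congrArg (PowerSeries.coeff (2 ^ n + i)) hzero).trans (map_zero _)).symm
  have := hli.cardinal_lift_le_rank
  simpa using this

/-- If some functionals bounded on the image of the unit ball under `T` have arbitrarily large norm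
on the range of `T`, there is an absolutely summable sequence in which only combinations with null
coefficients can lie in the range of `T`. -/
theorem exists_summable_tendsto_zero_of_mem_range
    (hdual : ∀ R : ℝ, ∃ (g : X →L[ℂ] ℂ) (u : X),
      (∀ y, ‖g (T y)‖ ≤ ‖y‖) ∧ ‖T u‖ ≤ 1 ∧ R < ‖g (T u)‖) :
    ∃ v : ℕ → X, (Summable fun n => ‖v n‖) ∧ ∀ (c : ℕ → ℂ) (M : ℝ), (∀ n, ‖c n‖ ≤ M) →
      ∑' n, c n • v n ∈ LinearMap.range (T : X →ₗ[ℂ] X) → Tendsto c atTop (𝓝 0) := by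
  have hstep : ∀ (n : ℕ) (a b : ℝ), 0 ≤ a → ∃ (g : X →L[ℂ] ℂ) (u : X), (∀ y, ‖g (T y)‖ ≤ ‖y‖) ∧
      (1 + a) * ‖T u‖ ≤ (1 / 2) ^ n ∧ (n + 1) * (1 + b) ≤ ‖g (T u)‖ := by
    intro n a b ha
    obtain ⟨g, u, hg, hu, hgu⟩ := hdual ((n + 1) * (1 + b) * (2 ^ n * (1 + a)))
    have hpos : (0 : ℝ) < 2 ^ n * (1 + a) := by positivity
    refine ⟨g, ((2 ^ n * (1 + a))⁻¹ : ℝ) • u, hg, ?_, ?_⟩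
    · rw [← Complex.coe_smul, map_smul, norm_smul, Complex.norm_real,
        Real.norm_of_nonneg (by positivity)]
      calc (1 + a) * ((2 ^ n * (1 + a))⁻¹ * ‖T u‖) ≤ (1 + a) * ((2 ^ n * (1 + a))⁻¹ * 1) := by
            gcongr
        _ = (1 / 2) ^ n := by
            rw [one_div, inv_pow]
            field_simp
    · rw [← Complex.coe_smul, map_smul, map_smul, norm_smul, Complex.norm_real,
        Real.norm_of_nonneg (by positivity), inv_mul_eq_div, le_div_iff₀ hpos]
      exact hgu.le
  choose! g u hg hu hgu using hstep
  let st : ℕ → ℝ × ℝ := fun n => Nat.rec (0, 0)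
    (fun k s => (s.1 + ‖g k s.1 s.2‖, s.2 + ‖u k s.1 s.2‖)) n
  let G : ℕ → X →L[ℂ] ℂ := fun n => g n (st n).1 (st n).2
  let U : ℕ → X := fun n => u n (st n).1 (st n).2
  have hst1 : ∀ n, (st n).1 = ∑ i ∈ Finset.range n, ‖G i‖ := by
    intro n
    induction n with
    | zero => rfl
    | succ n ih => rw [Finset.sum_range_succ, ← ih]
  have hst2 : ∀ n, (st n).2 = ∑ i ∈ Finset.range n, ‖U i‖ := by
    intro n
    induction n with
    | zero => rfl
    | succ n ih => rw [Finset.sum_range_succ, ← ih]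
  have hpos1 : ∀ n, 0 ≤ (st n).1 := fun n => by
    rw [hst1]
    exact Finset.sum_nonneg fun _ _ => norm_nonneg _
  have hpos2 : ∀ n, 0 ≤ (st n).2 := fun n => by
    rw [hst2]
    exact Finset.sum_nonneg fun _ _ => norm_nonneg _
  have hG : ∀ n y, ‖G n (T y)‖ ≤ ‖y‖ := fun n => hg n _ _ (hpos1 n)
  have hU : ∀ n, (1 + (st n).1) * ‖T (U n)‖ ≤ (1 / 2) ^ n := fun n => hu n _ (st n).2 (hpos1 n)
  have hGU : ∀ n : ℕ, (n + 1) * (1 + (st n).2) ≤ ‖G n (T (U n))‖ := fun n => hgu n _ _ (hpos1 n)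
  have hsmall : ∀ n, ‖T (U n)‖ ≤ (1 / 2 : ℝ) ^ n := fun n =>
    le_trans (le_mul_of_one_le_left (norm_nonneg _) (by linarith [hpos1 n])) (hU n)
  have htail : ∀ n i, n < i → ‖G n (T (U i))‖ ≤ (1 / 2 : ℝ) ^ i := by
    intro n i hni
    refine le_trans ((G n).le_opNorm _) (le_trans ?_ (hU i))
    gcongr
    rw [hst1]
    have := Finset.single_le_sum (f := fun i => ‖G i‖) (fun _ _ => norm_nonneg _)
      (Finset.mem_range.2 hni)
    linarith
  have hsum : Summable fun n => ‖T (U n)‖ :=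
    Summable.of_nonneg_of_le (fun _ => norm_nonneg _) hsmall summable_geometric_two
  refine ⟨fun n => T (U n), hsum, ?_⟩
  rintro c M hc ⟨y, hy⟩
  have hM : 0 ≤ M := (norm_nonneg _).trans (hc 0)
  have hcs : Summable fun n => c n • T (U n) := by
    refine Summable.of_norm_bounded (hsum.mul_left M) fun n => ?_
    rw [norm_smul]
    gcongr
    exact hc n
  have hkey : ∀ n : ℕ, ‖c n‖ ≤ (‖y‖ + 3 * M) / (n + 1) := by
    intro n
    have hgs : Summable fun i => c i * G n (T (U i)) := by
      simpa using (G n).summable hcs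
    have hgy : G n (T y) = ∑' i, c i * G n (T (U i)) := by
      have : T y = ∑' n, c n • T (U n) := hy
      rw [this, (G n).map_tsum hcs]
      simp
    rw [← hgs.sum_add_tsum_nat_add (n + 1), Finset.sum_range_succ] at hgy
    have hhead : ‖∑ i ∈ Finset.range n, c i * G n (T (U i))‖ ≤ M * (st n).2 := by
      rw [hst2, Finset.mul_sum]
      refine norm_sum_le_of_le _ fun i _ => ?_
      rw [norm_mul]
      exact mul_le_mul (hc i) (hG n _) (norm_nonneg _) hM
    have htl : ‖∑' i, c (i + (n + 1)) * G n (T (U (i + (n + 1))))‖ ≤ M * 2 := by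
      refine tsum_of_norm_bounded (hasSum_geometric_two.mul_left M) fun i => ?_
      rw [norm_mul]
      refine mul_le_mul (hc _) ((htail n _ (by omega)).trans ?_) (norm_nonneg _) hM
      exact pow_le_pow_of_le_one (by norm_num) (by norm_num) (by omega)
    have hmain : c n * G n (T (U n)) = G n (T y) - ∑ i ∈ Finset.range n, c i * G n (T (U i)) -
        ∑' i, c (i + (n + 1)) * G n (T (U (i + (n + 1)))) := by
      rw [hgy]
      ring
    have hle : ‖c n‖ * ((n + 1) * (1 + (st n).2)) ≤ (‖y‖ + 3 * M) * (1 + (st n).2) := by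
      calc ‖c n‖ * ((n + 1) * (1 + (st n).2)) ≤ ‖c n‖ * ‖G n (T (U n))‖ := by
            gcongr
            exact hGU n
        _ = ‖c n * G n (T (U n))‖ := (norm_mul _ _).symm
        _ ≤ ‖y‖ + M * (st n).2 + M * 2 := by
            rw [hmain]
            refine (norm_sub_le _ _).trans (add_le_add ((norm_sub_le _ _).trans ?_) htl)
            exact add_le_add (hG n y) hhead
        _ ≤ (‖y‖ + 3 * M) * (1 + (st n).2) := by
            nlinarith [mul_nonneg (norm_nonneg y) (hpos2 n), mul_nonneg hM (hpos2 n)]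
    rw [le_div_iff₀ (by positivity)]
    rw [← mul_assoc] at hle
    exact le_of_mul_le_mul_right hle (by linarith [hpos2 n])
  refine squeeze_zero_norm hkey ?_
  have := (tendsto_one_div_add_atTop_nhds_zero_nat (𝕜 := ℝ)).const_mul (‖y‖ + 3 * M)
  simpa [div_eq_mul_inv] using this

theorem continuum_le_rank_quotient_range
    (hdual : ∀ R : ℝ, ∃ (g : X →L[ℂ] ℂ) (u : X),
      (∀ y, ‖g (T y)‖ ≤ ‖y‖) ∧ ‖T u‖ ≤ 1 ∧ R < ‖g (T u)‖) :
    𝔠 ≤ Module.rank ℂ (X ⧸ LinearMap.range (T : X →ₗ[ℂ] X)) := by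
  obtain ⟨v, hv, hnull⟩ := exists_summable_tendsto_zero_of_mem_range hdual
  obtain ⟨χ, hχ, hind⟩ := exists_independent_mod_null
  have hsum : ∀ a, Summable fun n => χ a n • v n := fun a => by
    refine Summable.of_norm_bounded hv fun n => ?_
    rw [norm_smul]
    exact mul_le_of_le_one_left (norm_nonneg _) (hχ a n)
  have hli : LinearIndependent ℂ fun a =>
      (LinearMap.range (T : X →ₗ[ℂ] X)).mkQ (∑' n, χ a n • v n) := by
    rw [linearIndependent_iff]
    intro l hl
    refine hind l (hnull _ (∑ a ∈ l.support, ‖l a‖) (fun n => ?_) ?_)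
    · refine norm_sum_le_of_le _ fun a _ => ?_
      rw [norm_mul]
      exact mul_le_of_le_one_right (norm_nonneg _) (hχ a n)
    · have hcomb : ∑' n, (l.sum fun a c => c * χ a n) • v n =
          ∑ a ∈ l.support, l a • ∑' n, χ a n • v n := by
        simp only [Finsupp.sum, Finset.sum_smul, mul_smul]
        rw [Summable.tsum_finsetSum fun a _ => (hsum a).const_smul (l a)]
        exact Finset.sum_congr rfl fun a _ => (hsum a).tsum_const_smul (l a)
      rw [hcomb, ← Submodule.Quotient.mk_eq_zero, ← Submodule.mkQ_apply, map_sum]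
      simpa [Finsupp.linearCombination_apply, Finsupp.sum] using hl
  simpa using hli.cardinal_lift_le_rank

theorem mk_le_continuum_of_separable (X : Type*) [NormedAddCommGroup X] [CompleteSpace X]
    [TopologicalSpace.SeparableSpace X] : #X ≤ 𝔠 := by
  obtain ⟨f, -, hf⟩ := PolishSpace.exists_nat_nat_continuous_surjective X
  have := mk_le_of_surjective (f := f ∘ Equiv.ulift) (hf.comp Equiv.ulift.surjective)
  simpa using this

end Ranks

/-- Bounded injective quasinilpotent operators `T`, `S` on separable Banach spaces are similar as
soon as the range of `T` lies in the closure of that of `T ^ 2`, the transpose of `T` is not bounded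
below on functionals on the range of `T`, and likewise for `S`. -/
theorem exists_similarity_of_approx {X Y : Type*} [NormedAddCommGroup X] [NormedSpace ℂ X]
    [CompleteSpace X] [TopologicalSpace.SeparableSpace X] [Nontrivial X]
    [NormedAddCommGroup Y] [NormedSpace ℂ Y]
    [CompleteSpace Y] [TopologicalSpace.SeparableSpace Y] [Nontrivial Y]
    {T : X →L[ℂ] X} {S : Y →L[ℂ] Y}
    (hTi : Function.Injective T) (hTq : IsQuasinilpotentOp (T : X →ₗ[ℂ] X))
    (hTa : ∀ x, ∀ ε > 0, ∃ w, ‖T (x - T w)‖ ≤ ε)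
    (hTd : ∀ R : ℝ, ∃ (g : X →L[ℂ] ℂ) (u : X),
      (∀ y, ‖g (T y)‖ ≤ ‖y‖) ∧ ‖T u‖ ≤ 1 ∧ R < ‖g (T u)‖)
    (hSi : Function.Injective S) (hSq : IsQuasinilpotentOp (S : Y →ₗ[ℂ] Y))
    (hSa : ∀ x, ∀ ε > 0, ∃ w, ‖S (x - S w)‖ ≤ ε)
    (hSd : ∀ R : ℝ, ∃ (g : Y →L[ℂ] ℂ) (u : Y),
      (∀ y, ‖g (S y)‖ ≤ ‖y‖) ∧ ‖S u‖ ≤ 1 ∧ R < ‖g (S u)‖) :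
    ∃ G : X ≃ₗ[ℂ] Y, ∀ x, G (T x) = S (G x) := by
  refine exists_similarity_of_tame (T := (T : X →ₗ[ℂ] X)) (S := (S : Y →ₗ[ℂ] Y))
    hTi hTq (isTameOp_of_approx hTa) ?_ ?_ hSi hSq (isTameOp_of_approx hSa) ?_ ?_
  · refine le_antisymm ((rank_le_card _ _).trans ?_) (continuum_le_rank_powerCore hTi
      (fun C hC => summable_pow_mul_norm_pow hTq hC) (exists_mem_powerCore_ne_zero hTi hTa))
    exact (mk_subtype_le _).trans (mk_le_continuum_of_separable X)
  · exact le_antisymm ((rank_le_card _ _).trans ((mk_le_of_surjective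
      (Submodule.mkQ_surjective _)).trans (mk_le_continuum_of_separable X)))
      (continuum_le_rank_quotient_range hTd)
  · refine le_antisymm ((rank_le_card _ _).trans ?_) (continuum_le_rank_powerCore hSi
      (fun C hC => summable_pow_mul_norm_pow hSq hC) (exists_mem_powerCore_ne_zero hSi hSa))
    exact (mk_subtype_le _).trans (mk_le_continuum_of_separable Y)
  · exact le_antisymm ((rank_le_card _ _).trans ((mk_le_of_surjective
      (Submodule.mkQ_surjective _)).trans (mk_le_continuum_of_separable Y)))
      (continuum_le_rank_quotient_range hSd)

/-- The transpose of a quasinilpotent operator with dense range is not bounded below. -/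
theorem exists_functional_of_denseRange {X : Type*} [NormedAddCommGroup X] [NormedSpace ℂ X]
    [CompleteSpace X] [Nontrivial X] {T : X →L[ℂ] X} (hq : IsQuasinilpotentOp (T : X →ₗ[ℂ] X))
    (hdense : DenseRange T) (R : ℝ) : ∃ (g : X →L[ℂ] ℂ) (u : X),
      (∀ y, ‖g (T y)‖ ≤ ‖y‖) ∧ ‖T u‖ ≤ 1 ∧ R < ‖g (T u)‖ := by
  by_contra! hno
  obtain ⟨x₀, hx₀⟩ := exists_ne (0 : X)
  obtain ⟨g₀, hg₀, -⟩ := exists_dual_vector ℂ x₀ (norm_ne_zero_iff.2 hx₀)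
  have hR : 0 ≤ R := by simpa using hno 0 0 (by simp) (by simp)
  have hball : ∀ (g : X →L[ℂ] ℂ), (∀ y, ‖g (T y)‖ ≤ ‖y‖) → ∀ u, ‖g (T u)‖ ≤ R * ‖T u‖ := by
    intro g hg u
    rcases eq_or_ne (T u) 0 with h0 | h0
    · simp [h0]
    · have h1 := hno g (((‖T u‖⁻¹ : ℝ) : ℂ) • u) hg (by
        rw [map_smul, norm_smul, Complex.norm_real, norm_inv, norm_norm,
          inv_mul_cancel₀ (norm_ne_zero_iff.2 h0)])
      rw [map_smul, map_smul, norm_smul, Complex.norm_real, norm_inv, norm_norm,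
        inv_mul_le_iff₀ (norm_pos_iff.2 h0)] at h1
      linarith
  have hnorm : ∀ (g : X →L[ℂ] ℂ) (c : ℝ), 0 < c → (∀ y, ‖g (T y)‖ ≤ c * ‖y‖) → ‖g‖ ≤ R * c := by
    intro g c hc hg
    refine g.opNorm_le_bound (by positivity) fun x => ?_
    refine hdense.induction_on (p := fun x => ‖g x‖ ≤ R * c * ‖x‖) x
      (isClosed_le (by fun_prop) (by fun_prop)) fun u => ?_
    have hinv : ‖((c⁻¹ : ℝ) : ℂ)‖ = c⁻¹ := by
      rw [Complex.norm_real, Real.norm_of_nonneg (by positivity)]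
    have := hball (((c⁻¹ : ℝ) : ℂ) • g) (fun y => by
      rw [smul_apply, norm_smul, hinv, inv_mul_le_iff₀ hc]
      exact hg y) u
    rw [smul_apply, norm_smul, hinv, inv_mul_le_iff₀ hc] at this
    linarith
  have hcomp : ∀ g : X →L[ℂ] ℂ, ‖g‖ ≤ R * ‖g ∘L T‖ := by
    intro g
    have hlim : Tendsto (fun δ : ℝ => R * (‖g ∘L T‖ + δ)) (𝓝[>] 0) (𝓝 (R * (‖g ∘L T‖ + 0))) :=
      (Continuous.tendsto (by fun_prop) 0).mono_left nhdsWithin_le_nhds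
    rw [add_zero] at hlim
    refine ge_of_tendsto hlim (eventually_nhdsWithin_of_forall fun δ (hδ : 0 < δ) => ?_)
    refine hnorm g _ (by positivity) fun y => ((g ∘L T).le_opNorm y).trans ?_
    gcongr
    linarith
  have hiter : ∀ n : ℕ, ‖g₀‖ ≤ R ^ n * ‖g₀ ∘L (T ^ n)‖ := by
    intro n
    induction n with
    | zero => simp [ContinuousLinearMap.one_def]
    | succ n ih =>
      refine ih.trans ?_
      rw [pow_succ, mul_assoc, pow_succ]
      gcongr
      exact hcomp (g₀ ∘L (T ^ n))
  have hone : ∀ n : ℕ, 1 ≤ R ^ n * ‖T ^ n‖ := fun n => by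
    refine hg₀.symm.le.trans ((hiter n).trans ?_)
    gcongr
    simpa [hg₀] using g₀.opNorm_comp_le (T ^ n)
  exact absurd (ge_of_tendsto' (summable_pow_mul_norm_pow hq hR).tendsto_atTop_zero hone)
    (by norm_num)

theorem isQuasinilpotentOp_of_norm_pow_le {X : Type*} [NormedAddCommGroup X] [NormedSpace ℂ X]
    [CompleteSpace X] [Nontrivial X] {T : X →L[ℂ] X}
    (hT : ∀ n : ℕ, ‖T ^ n‖ ≤ 1 / n.factorial) : IsQuasinilpotentOp (T : X →ₗ[ℂ] X) := by
  intro z hz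
  have hspec : z ∉ spectrum ℂ T := by
    intro hmem
    have hle : ∀ n : ℕ, 1 ≤ ‖z‖⁻¹ ^ n / n.factorial := by
      intro n
      have h1 := (spectrum.norm_le_norm_of_mem (spectrum.pow_mem_pow T n hmem)).trans (hT n)
      rw [norm_pow] at h1
      have hz' : 0 < ‖z‖ ^ n := pow_pos (norm_pos_iff.2 hz) n
      rw [inv_pow, inv_eq_one_div, div_div, mul_comm, ← div_div, le_div_iff₀ hz', one_mul]
      exact h1
    exact absurd (ge_of_tendsto' (FloorSemiring.tendsto_pow_div_factorial_atTop ‖z‖⁻¹) hle)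
      (by norm_num)
  rw [spectrum.notMem_iff, ContinuousLinearMap.isUnit_iff_bijective] at hspec
  have hneg : (fun x => (T : X →ₗ[ℂ] X) x - z • x) =
      Equiv.neg X ∘ ⇑(algebraMap ℂ (X →L[ℂ] X) z - T) := by
    ext x
    simp [Algebra.algebraMap_eq_smul_one]
  rw [hneg]
  exact (Equiv.neg X).bijective.comp hspec

section Volterra

theorem volterra_apply (f : C(Icc (0 : ℝ) 1, ℂ)) (x : Icc (0 : ℝ) 1) :
    volterra f x = ∫ t in (0 : ℝ)..x, f (projIcc 0 1 zero_le_one t) := rfl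

theorem norm_volterra_pow_apply_le (n : ℕ) (f : C(Icc (0 : ℝ) 1, ℂ)) (x : Icc (0 : ℝ) 1) :
    ‖(volterra ^ n) f x‖ ≤ ‖f‖ * ((x : ℝ) ^ n / n.factorial) := by
  induction n generalizing x with
  | zero => simpa using f.norm_coe_le_norm x
  | succ n ih =>
    rw [pow_succ', Module.End.mul_apply, volterra_apply]
    have hint : ∫ t in (0 : ℝ)..x, ‖f‖ * (t ^ n / n.factorial) =
        ‖f‖ * ((x : ℝ) ^ (n + 1) / (n + 1).factorial) := by
      rw [intervalIntegral.integral_const_mul, intervalIntegral.integral_div, integral_pow,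
        Nat.factorial_succ]
      push_cast
      field_simp
      simp
    rw [← hint]
    refine intervalIntegral.norm_integral_le_of_norm_le x.2.1 (ae_of_all _ fun t ht => ?_)
      (Continuous.intervalIntegrable (by fun_prop) _ _)
    have ht' : t ∈ Icc (0 : ℝ) 1 := ⟨ht.1.le, ht.2.trans x.2.2⟩
    simpa [projIcc_of_mem zero_le_one ht'] using ih ⟨t, ht'⟩

theorem norm_volterra_apply_le (f : C(Icc (0 : ℝ) 1, ℂ)) (x : Icc (0 : ℝ) 1) :
    ‖volterra f x‖ ≤ ‖f‖ * x := by
  simpa using norm_volterra_pow_apply_le 1 f x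

/-- The Volterra operator as a bounded operator. -/
noncomputable def volterraCLM : C(Icc (0 : ℝ) 1, ℂ) →L[ℂ] C(Icc (0 : ℝ) 1, ℂ) :=
  volterra.mkContinuous 1 fun f => by
    rw [one_mul, ContinuousMap.norm_le _ (norm_nonneg _)]
    exact fun x => (norm_volterra_apply_le f x).trans
      (mul_le_of_le_one_right (norm_nonneg _) x.2.2)

theorem coe_volterraCLM :
    (volterraCLM : C(Icc (0 : ℝ) 1, ℂ) →ₗ[ℂ] C(Icc (0 : ℝ) 1, ℂ)) = volterra := rfl

theorem norm_volterraCLM_pow_le (n : ℕ) : ‖volterraCLM ^ n‖ ≤ 1 / n.factorial := by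
  refine ContinuousLinearMap.opNorm_le_bound _ (by positivity) fun f => ?_
  rw [ContinuousMap.norm_le _ (by positivity)]
  intro x
  have hx : (x : ℝ) ^ n ≤ 1 := pow_le_one₀ x.2.1 x.2.2
  rw [← coe_pow_apply, coe_volterraCLM]
  refine (norm_volterra_pow_apply_le n f x).trans ?_
  rw [mul_comm]
  gcongr

theorem isQuasinilpotentOp_volterra : IsQuasinilpotentOp volterra :=
  isQuasinilpotentOp_of_norm_pow_le norm_volterraCLM_pow_le

theorem volterra_injective : Function.Injective volterra := by
  rw [injective_iff_map_eq_zero]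
  intro f hf
  ext x
  have hcont : Continuous fun t => f (projIcc 0 1 zero_le_one t) :=
    f.continuous.comp continuous_projIcc
  have hderiv := (hcont.integral_hasStrictDerivAt 0 (x : ℝ)).hasDerivAt.hasDerivWithinAt
    (s := Icc 0 1)
  have hzero : HasDerivWithinAt (fun u => ∫ t in (0 : ℝ)..u, f (projIcc 0 1 zero_le_one t)) 0
      (Icc 0 1) (x : ℝ) :=
    (hasDerivWithinAt_const (x : ℝ) (Icc 0 1) (0 : ℂ)).congr_of_mem
      (fun u hu => DFunLike.congr_fun hf ⟨u, hu⟩) x.2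
  simpa using (uniqueDiffOn_Icc zero_lt_one (x : ℝ) x.2).eq_deriv _ hderiv hzero

theorem volterra_apply_of_hasDerivAt {k : C(Icc (0 : ℝ) 1, ℂ)} {G : ℝ → ℂ} (h0 : G 0 = 0)
    (h : ∀ t : Icc (0 : ℝ) 1, HasDerivAt G (k t) t) (x : Icc (0 : ℝ) 1) :
    volterra k x = G x := by
  rw [volterra_apply, intervalIntegral.integral_eq_sub_of_hasDerivAt (f := G), h0, sub_zero]
  · intro t ht
    rw [uIcc_of_le x.2.1] at ht
    have ht' : t ∈ Icc (0 : ℝ) 1 := ⟨ht.1, ht.2.trans x.2.2⟩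
    simpa [projIcc_of_mem zero_le_one ht'] using h ⟨t, ht'⟩
  · exact (k.continuous.comp continuous_projIcc).intervalIntegrable _ _

/-- The solution `g` of the equation `deriv g + N g = f`, `g 0 = 0` is bounded by `‖f‖ / N`. -/
theorem exists_volterra_sub_smul_eq (f : C(Icc (0 : ℝ) 1, ℂ)) {N : ℝ} (hN : 0 < N) :
    ∃ g : C(Icc (0 : ℝ) 1, ℂ), volterra (f - (N : ℂ) • g) = g ∧ ‖g‖ ≤ ‖f‖ / N := by
  let F : ℝ → ℂ := fun t => f (projIcc 0 1 zero_le_one t)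
  have hF : Continuous F := f.continuous.comp continuous_projIcc
  have hFn : ∀ t, ‖F t‖ ≤ ‖f‖ := fun t => f.norm_coe_le_norm _
  let P : ℝ → ℂ := fun x => ∫ t in (0 : ℝ)..x, Complex.exp (N * t) * F t
  have hcont : Continuous fun t : ℝ => Complex.exp (N * t) * F t := by fun_prop
  have hP : ∀ x : ℝ, HasDerivAt P (Complex.exp (N * x) * F x) x := fun x =>
    (hcont.integral_hasStrictDerivAt 0 x).hasDerivAt
  have hPc : Continuous P := continuous_iff_continuousAt.2 fun x => (hP x).continuousAt
  have hexp : ∀ x : ℝ, HasDerivAt (fun x : ℝ => Complex.exp (-(N * x)))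
      (Complex.exp (-(N * x)) * -N) x := fun x => by
    have := ((Complex.ofRealCLM.hasDerivAt (x := x)).const_mul (N : ℂ)).neg.cexp
    simpa using this
  let g : C(Icc (0 : ℝ) 1, ℂ) :=
    ⟨fun x => Complex.exp (-(N * (x : ℝ))) * P x, by fun_prop⟩
  refine ⟨g, ?_, ?_⟩
  · ext x
    refine volterra_apply_of_hasDerivAt (G := fun x => Complex.exp (-(N * x)) * P x)
      (by simp [P]) (fun t => ?_) x
    refine ((hexp t).mul (hP t)).congr_deriv ?_
    have hFt : F t = f t := by simp [F]
    rw [← mul_assoc, ← Complex.exp_add, neg_add_cancel, Complex.exp_zero, one_mul, hFt]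
    simp only [g, ContinuousMap.sub_apply, ContinuousMap.smul_apply, ContinuousMap.coe_mk,
      smul_eq_mul]
    ring
  · rw [ContinuousMap.norm_le _ (by positivity)]
    intro x
    have hint : ‖P x‖ ≤ ∫ t in (0 : ℝ)..x, Real.exp (N * t) * ‖f‖ := by
      refine intervalIntegral.norm_integral_le_of_norm_le x.2.1 (ae_of_all _ fun t _ => ?_)
        (Continuous.intervalIntegrable (by fun_prop) _ _)
      rw [norm_mul, Complex.norm_exp]
      simpa using mul_le_mul_of_nonneg_left (hFn t) (Real.exp_pos (N * t)).le
    have hval : ∫ t in (0 : ℝ)..x, Real.exp (N * t) * ‖f‖ =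
        (Real.exp (N * x) - 1) / N * ‖f‖ := by
      rw [intervalIntegral.integral_mul_const, intervalIntegral.integral_comp_mul_left _ hN.ne',
        integral_exp]
      simp [inv_mul_eq_div]
    calc ‖g x‖ = Real.exp (-(N * x)) * ‖P x‖ := by simp [g, Complex.norm_exp]
      _ ≤ Real.exp (-(N * x)) * ((Real.exp (N * x)) / N * ‖f‖) := by
        rw [hval] at hint
        gcongr
        refine hint.trans ?_
        gcongr
        linarith
      _ = ‖f‖ / N := by
        rw [Real.exp_neg]
        field_simp

theorem exists_norm_volterra_sub_le (f : C(Icc (0 : ℝ) 1, ℂ)) {ε : ℝ} (hε : 0 < ε) :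
    ∃ w, ‖volterra (f - volterra w)‖ ≤ ε := by
  have hN : 0 < (‖f‖ + 1) / ε := by positivity
  obtain ⟨g, hg, hgn⟩ := exists_volterra_sub_smul_eq f hN
  refine ⟨(((‖f‖ + 1) / ε : ℝ) : ℂ) • (f - (((‖f‖ + 1) / ε : ℝ) : ℂ) • g), ?_⟩
  rw [map_smul, hg, hg]
  refine hgn.trans ?_
  rw [div_div_eq_mul_div, div_le_iff₀ (by positivity)]
  nlinarith [norm_nonneg f]

theorem exists_functional_volterra (R : ℝ) :
    ∃ (g : C(Icc (0 : ℝ) 1, ℂ) →L[ℂ] ℂ) (u : C(Icc (0 : ℝ) 1, ℂ)),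
      (∀ y, ‖g (volterra y)‖ ≤ ‖y‖) ∧ ‖volterra u‖ ≤ 1 ∧ R < ‖g (volterra u)‖ := by
  obtain ⟨N, hN1, hNR⟩ : ∃ N : ℝ, 1 ≤ N ∧ 2 * R < N :=
    ⟨max 1 (2 * R + 1), le_max_left _ _, lt_of_lt_of_le (by linarith) (le_max_right _ _)⟩
  have hN0 : 0 < N := by linarith
  let p : Icc (0 : ℝ) 1 := ⟨N⁻¹, by positivity, inv_le_one_of_one_le₀ hN1⟩
  let u : C(Icc (0 : ℝ) 1, ℂ) := ⟨fun x => ((N * Real.exp (-(N * x)) : ℝ) : ℂ), by fun_prop⟩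
  have hVu : ∀ x, volterra u x = ((1 - Real.exp (-(N * x)) : ℝ) : ℂ) := by
    refine volterra_apply_of_hasDerivAt
      (G := fun x : ℝ => ((1 - Real.exp (-(N * x)) : ℝ) : ℂ)) (by simp)
      fun t => HasDerivAt.ofReal_comp ?_
    have := (((hasDerivAt_id (t : ℝ)).const_mul N).neg.exp).const_sub 1
    simpa [mul_comm] using this
  let g : C(Icc (0 : ℝ) 1, ℂ) →L[ℂ] ℂ := (N : ℂ) • ContinuousMap.evalCLM ℂ p
  have hg : ∀ y, ‖g y‖ = N * ‖y p‖ := fun y => by simp [g, abs_of_pos hN0]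
  refine ⟨g, u, fun y => ?_, ?_, ?_⟩
  · rw [hg, ← le_div_iff₀' hN0]
    exact norm_volterra_apply_le y p
  · rw [ContinuousMap.norm_le _ zero_le_one]
    intro x
    have h1 : Real.exp (-(N * x)) ≤ 1 := Real.exp_le_one_iff.2 (by
      have := mul_nonneg hN0.le x.2.1
      linarith)
    rw [hVu, Complex.norm_real, Real.norm_of_nonneg (by linarith)]
    linarith [Real.exp_pos (-(N * x))]
  · have hp : N * (p : ℝ) = 1 := mul_inv_cancel₀ hN0.ne'
    have he : Real.exp (-1) < 1 / 2 := by
      have := Real.exp_neg_one_lt_d9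
      norm_num at this ⊢
      linarith
    rw [hg, hVu, hp, Complex.norm_real, Real.norm_of_nonneg (by linarith)]
    nlinarith

end Volterra

/-- Corollary 1.3: any injective quasinilpotent bounded linear operator with dense range
on a separable infinite-dimensional complex Banach space is algebraically similar to the
Volterra operator acting on `C[0,1]`. -/
theorem similar_to_volterra_of_denseRange
    {X : Type*} [NormedAddCommGroup X] [NormedSpace ℂ X] [CompleteSpace X]
    [TopologicalSpace.SeparableSpace X] (hinfdim : ¬ FiniteDimensional ℂ X)
    (T : X →ₗ[ℂ] X) (hT : Continuous T)
    (hinj : Function.Injective T) (hq : IsQuasinilpotentOp T)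
    (hdense : DenseRange T) :
    ∃ G : X ≃ₗ[ℂ] C(Set.Icc (0:ℝ) 1, ℂ), ∀ x : X, G (T x) = volterra (G x) := by
  have : Nontrivial X := by
    by_contra h
    rw [not_nontrivial_iff_subsingleton] at h
    exact hinfdim inferInstance
  let T' : X →L[ℂ] X := ⟨T, hT⟩
  have happrox : ∀ x, ∀ ε > 0, ∃ w, ‖T' (x - T' w)‖ ≤ ε := by
    intro x ε hε
    obtain ⟨w, hw⟩ := hdense.exists_dist_lt x (ε := ε / (‖T'‖ + 1)) (by positivity)
    refine ⟨w, (T'.le_opNorm _).trans ?_⟩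
    rw [dist_eq_norm, lt_div_iff₀ (by positivity)] at hw
    have : ‖x - T' w‖ * (‖T'‖ + 1) < ε := hw
    nlinarith [norm_nonneg (x - T' w)]
  exact exists_similarity_of_approx (T := T') (S := volterraCLM) hinj hq happrox
    (exists_functional_of_denseRange hq hdense) volterra_injective isQuasinilpotentOp_volterra
    (fun f _ hε => exists_norm_volterra_sub_le f hε) exists_functional_volterra
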